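/- For every positive integer k and every x ≥ 0, the power series Σ_{n=0}^∞ ((-1)^n ℓ_{n,k}/n!) x^n converges (it has infinite radius of convergence) and φ_k(x) = e^{-x} Σ_{n=0}^∞ ((-1)^n ℓ_{n,k}/n!) x^n; in particular, the sequence (ℓ_{n,k})_{n≥0} converges to 0 in the Borel sense. -/

import Mathlib

open scoped Real Topology
open Complex Filter MeasureTheory Finset Asymptotics

/-- The analytic extension of `s ↦ ((s-1) * ζ(s))^k` to `s = 1` (where its value is `1`). -/
noncomputable def zetaPowAux (k : ℕ) : ℂ → ℂ :=
  Function.update (fun s : ℂ => ((s - 1) * riemannZeta s) ^ k) 1 1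

/-- `lam k j` is the Taylor coefficient `λ_{j,k}`, i.e. the `j`-th derivative at `s = 1` of the
analytic extension of `(s-1)^k ζ(s)^k`; these numbers are real, and we record their real part. -/
noncomputable def lam (k j : ℕ) : ℝ :=
  (iteratedDeriv j (zetaPowAux k) 1).re

/-- The Fourier coefficients `ℓ_{n,k}` for `n ≥ -k` (an integer index). -/
noncomputable def ell (k : ℕ) (n : ℤ) : ℝ :=
  if 1 ≤ n then
    (-1 : ℝ) ^ n.toNat *
      ∑ j ∈ Finset.Icc 1 n.toNat,
        ((n.toNat - 1).choose (j - 1) : ℝ) * lam k (j + k) / (Nat.factorial (j + k))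
  else
    (-1 : ℝ) ^ k *
      ∑ j ∈ Finset.range ((k + n).toNat + 1),
        ((k - j).choose (-n).toNat : ℝ) * (-1 : ℝ) ^ j * lam k j / (Nat.factorial j)

/-- The Lindelöf Hypothesis: `ζ(1/2 + it) = O(|t|^ε)` for every `ε > 0`. -/
def LindelofHypothesis : Prop :=
  ∀ ε : ℝ, 0 < ε → ∃ C : ℝ, ∀ t : ℝ, 1 ≤ |t| →
    ‖riemannZeta (1 / 2 + t * Complex.I)‖ ≤ C * |t| ^ ε

/-- `dk k n` is the Piltz divisor function `d_k(n)`: the number of representations of `n` as an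
ordered product of `k` positive integers (the `k`-th Dirichlet-convolution power of `ζ`). -/
noncomputable def dk (k n : ℕ) : ℕ := (ArithmeticFunction.zeta ^ k) n

/-- The coefficients `a_{j,k}` of the polynomial `P_k`. -/
noncomputable def aCoef (k j : ℕ) : ℝ :=
  (-1 : ℝ) ^ (k - 1 - j) *
    ∑ i ∈ Finset.range (k - 1 - j + 1), (-1 : ℝ) ^ i * lam k i / (Nat.factorial i)

/-- The error term `Δ_k(x) = (Σ_{1 ≤ n ≤ x} d_k(n)) - x P_k(log x)` in the Piltz divisor
problem. -/
noncomputable def Deltak (k : ℕ) (x : ℝ) : ℝ :=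
  (∑ n ∈ Finset.Icc 1 ⌊x⌋₊, (dk k n : ℝ)) -
    x * ∑ j ∈ Finset.range k, aCoef k j / (Nat.factorial j) * (Real.log x) ^ j

/-- The `n`-th Laguerre polynomial. -/
noncomputable def laguerre (n : ℕ) (u : ℝ) : ℝ :=
  ∑ j ∈ Finset.range (n + 1), (n.choose j : ℝ) * (-1 : ℝ) ^ j * u ^ j / (Nat.factorial j)

/-- The Bessel function of the first kind of order `0`. -/
noncomputable def besselJ0 (u : ℝ) : ℝ :=
  ∑' m : ℕ, (-1 : ℝ) ^ m * (u / 2) ^ (2 * m) / ((Nat.factorial m : ℝ) ^ 2)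

/-- `φ_k(x) = ∫_1^∞ Δ_k(r) J₀(2 √(x log r)) r⁻² dr`. -/
noncomputable def phik (k : ℕ) (x : ℝ) : ℝ :=
  ∫ r in Set.Ioi (1 : ℝ), Deltak k r * besselJ0 (2 * Real.sqrt (x * Real.log r)) / r ^ 2

/-- `f` decays exponentially on `[0, ∞)`. -/
def ExpDecay (f : ℝ → ℝ) : Prop :=
  ∃ C δ : ℝ, 0 < δ ∧ ∀ t, 0 ≤ t → |f t| ≤ C * Real.exp (-(δ * t))

/-- `f` agrees with a polynomial on `[0, ∞)` up to an exponentially decaying error. -/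
def ExpPoly (f : ℝ → ℝ) : Prop :=
  ∃ p : Polynomial ℝ, ExpDecay fun t => f t - p.eval t

theorem ExpDecay.mono {f g : ℝ → ℝ} (hf : ExpDecay f) (h : ∀ t, 0 ≤ t → |g t| ≤ |f t|) :
    ExpDecay g := by
  obtain ⟨C, δ, hδ, H⟩ := hf
  exact ⟨C, δ, hδ, fun t ht => (h t ht).trans (H t ht)⟩

theorem ExpDecay.congr {f g : ℝ → ℝ} (hf : ExpDecay f) (h : ∀ t, 0 ≤ t → g t = f t) :
    ExpDecay g :=
  hf.mono fun t ht => (congrArg _ (h t ht)).le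

theorem ExpDecay.exists_pos {f : ℝ → ℝ} (hf : ExpDecay f) :
    ∃ C δ : ℝ, 0 ≤ C ∧ 0 < δ ∧ ∀ t, 0 ≤ t → |f t| ≤ C * Real.exp (-(δ * t)) := by
  obtain ⟨C, δ, hδ, H⟩ := hf
  refine ⟨C, δ, ?_, hδ, H⟩
  simpa using (abs_nonneg _).trans (H 0 le_rfl)

theorem expDecay_exp {δ : ℝ} (hδ : 0 < δ) : ExpDecay fun t => Real.exp (-(δ * t)) :=
  ⟨1, δ, hδ, fun t _ => by simp⟩

theorem ExpDecay.add {f g : ℝ → ℝ} (hf : ExpDecay f) (hg : ExpDecay g) :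
    ExpDecay fun t => f t + g t := by
  obtain ⟨C, δ, hC, hδ, H⟩ := hf.exists_pos
  obtain ⟨C', δ', hC', hδ', H'⟩ := hg.exists_pos
  refine ⟨C + C', min δ δ', lt_min hδ hδ', fun t ht => (abs_add_le _ _).trans ?_⟩
  rw [add_mul]
  refine add_le_add ((H t ht).trans ?_) ((H' t ht).trans ?_) <;> gcongr
  · exact min_le_left _ _
  · exact min_le_right _ _

theorem ExpDecay.const_mul {f : ℝ → ℝ} (hf : ExpDecay f) (c : ℝ) : ExpDecay fun t => c * f t := by
  obtain ⟨C, δ, hδ, H⟩ := hf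
  refine ⟨|c| * C, δ, hδ, fun t ht => ?_⟩
  rw [abs_mul, mul_assoc]
  exact mul_le_mul_of_nonneg_left (H t ht) (abs_nonneg _)

theorem ExpDecay.comp_half {f : ℝ → ℝ} (hf : ExpDecay f) : ExpDecay fun t => f (t / 2) := by
  obtain ⟨C, δ, hδ, H⟩ := hf
  refine ⟨C, δ / 2, by positivity, fun t ht => (H (t / 2) (by positivity)).trans_eq ?_⟩
  ring_nf

theorem ExpDecay.mul {f g : ℝ → ℝ} (hf : ExpDecay f) (hg : ExpDecay g) :
    ExpDecay fun t => f t * g t := by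
  obtain ⟨C, δ, hC, hδ, H⟩ := hf.exists_pos
  obtain ⟨C', δ', hC', hδ', H'⟩ := hg.exists_pos
  refine ⟨C * C', δ + δ', by positivity, fun t ht => ?_⟩
  rw [abs_mul]
  refine (mul_le_mul (H t ht) (H' t ht) (abs_nonneg _) (by positivity)).trans_eq ?_
  rw [add_mul, neg_add, Real.exp_add]
  ring

theorem ExpDecay.mul_pow {f : ℝ → ℝ} (hf : ExpDecay f) (n : ℕ) :
    ExpDecay fun t => f t * t ^ n := by
  obtain ⟨C, δ, hC, hδ, H⟩ := hf.exists_pos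
  refine ⟨C * (n.factorial * (2 / δ) ^ n), δ / 2, by positivity, fun t ht => ?_⟩
  have h := Real.pow_div_factorial_le_exp (x := δ / 2 * t) (by positivity) n
  rw [div_le_iff₀ (by positivity)] at h
  have h2 : t ^ n ≤ n.factorial * (2 / δ) ^ n * Real.exp (δ / 2 * t) := by
    calc t ^ n = (2 / δ) ^ n * (δ / 2 * t) ^ n := by
          rw [← _root_.mul_pow]; congr 1; field_simp
      _ ≤ (2 / δ) ^ n * (Real.exp (δ / 2 * t) * n.factorial) := by gcongr
      _ = _ := by ring
  rw [abs_mul, abs_of_nonneg (pow_nonneg ht n)]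
  calc |f t| * t ^ n
      ≤ C * Real.exp (-(δ * t)) * (n.factorial * (2 / δ) ^ n * Real.exp (δ / 2 * t)) :=
        mul_le_mul (H t ht) h2 (by positivity) (by positivity)
    _ = C * (n.factorial * (2 / δ) ^ n) * (Real.exp (-(δ * t)) * Real.exp (δ / 2 * t)) := by ring
    _ = _ := by rw [← Real.exp_add]; ring_nf

theorem ExpDecay.mul_eval {f : ℝ → ℝ} (hf : ExpDecay f) (p : Polynomial ℝ) :
    ExpDecay fun t => f t * p.eval t := by
  induction p using Polynomial.induction_on' with
  | add p q hp hq => exact (hp.add hq).congr fun t _ => by simp [mul_add]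
  | monomial n a => exact ((hf.mul_pow n).const_mul a).congr fun t _ => by simp; ring

theorem ExpDecay.expPoly {f : ℝ → ℝ} (hf : ExpDecay f) : ExpPoly f := ⟨0, by simpa using hf⟩

theorem ExpPoly.congr {f g : ℝ → ℝ} (hf : ExpPoly f) (h : ∀ t, 0 ≤ t → g t = f t) :
    ExpPoly g := by
  obtain ⟨p, hp⟩ := hf
  exact ⟨p, hp.congr fun t ht => by rw [h t ht]⟩

theorem expPoly_eval (p : Polynomial ℝ) : ExpPoly fun t => p.eval t :=
  ⟨p, 0, 1, one_pos, by simp⟩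

theorem expPoly_pow (n : ℕ) : ExpPoly fun t => t ^ n :=
  (expPoly_eval (Polynomial.X ^ n)).congr fun t _ => by simp

theorem expPoly_const (c : ℝ) : ExpPoly fun _ => c :=
  (expPoly_eval (Polynomial.C c)).congr fun t _ => by simp

theorem ExpPoly.add {f g : ℝ → ℝ} (hf : ExpPoly f) (hg : ExpPoly g) :
    ExpPoly fun t => f t + g t := by
  obtain ⟨p, hp⟩ := hf
  obtain ⟨q, hq⟩ := hg
  exact ⟨p + q, (hp.add hq).congr fun t _ => by simp; ring⟩

theorem ExpDecay.mul_expPoly {f g : ℝ → ℝ} (hf : ExpDecay f) (hg : ExpPoly g) :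
    ExpDecay fun t => f t * g t := by
  obtain ⟨q, hq⟩ := hg
  exact ((hf.mul hq).add (hf.mul_eval q)).congr fun t _ => by ring

theorem ExpPoly.mul {f g : ℝ → ℝ} (hf : ExpPoly f) (hg : ExpPoly g) :
    ExpPoly fun t => f t * g t := by
  obtain ⟨p, hp⟩ := hf
  obtain ⟨q, hq⟩ := id hg
  exact ⟨p * q, ((hp.mul_expPoly hg).add (hq.mul_eval p)).congr fun t _ => by simp; ring⟩

theorem ExpPoly.const_mul {f : ℝ → ℝ} (hf : ExpPoly f) (c : ℝ) : ExpPoly fun t => c * f t :=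
  (expPoly_const c).mul hf

theorem ExpPoly.sub {f g : ℝ → ℝ} (hf : ExpPoly f) (hg : ExpPoly g) :
    ExpPoly fun t => f t - g t :=
  (hf.add (hg.const_mul (-1))).congr fun t _ => by ring

theorem ExpPoly.sum {ι : Type*} (s : Finset ι) {f : ι → ℝ → ℝ} (hf : ∀ i ∈ s, ExpPoly (f i)) :
    ExpPoly fun t => ∑ i ∈ s, f i t := by
  classical
  induction s using Finset.induction_on with
  | empty => simpa using expPoly_const 0
  | insert a s ha ih =>
    refine ((hf a (mem_insert_self a s)).add
      (ih fun i hi => hf i (mem_insert_of_mem hi))).congr fun t _ => ?_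
    rw [sum_insert ha]

theorem ExpPoly.comp_half {f : ℝ → ℝ} (hf : ExpPoly f) : ExpPoly fun t => f (t / 2) := by
  obtain ⟨p, hp⟩ := hf
  refine ⟨p.comp (Polynomial.C (1 / 2) * Polynomial.X), hp.comp_half.congr fun t _ => ?_⟩
  simp only [Polynomial.eval_comp, Polynomial.eval_mul, Polynomial.eval_C, Polynomial.eval_X]
  ring_nf

theorem ExpDecay.integrableOn {f : ℝ → ℝ} (hf : ExpDecay f) (hm : Measurable f) :
    IntegrableOn f (Set.Ioi 0) := by
  obtain ⟨C, δ, hδ, H⟩ := hf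
  refine Integrable.mono' ((exp_neg_integrableOn_Ioi 0 hδ).const_mul C)
    hm.aestronglyMeasurable ?_
  filter_upwards [ae_restrict_mem measurableSet_Ioi] with t ht
  simpa using H t (le_of_lt ht)

/-- The primitive of an exponentially decaying function differs from a constant by an
exponentially decaying function. -/
theorem ExpDecay.expPoly_integral {f : ℝ → ℝ} (hf : ExpDecay f) (hm : Measurable f) :
    ExpPoly fun t => ∫ v in Set.Ioc 0 t, f v := by
  have hi := hf.integrableOn hm
  obtain ⟨C, δ, hδ, H⟩ := hf
  refine ⟨Polynomial.C (∫ v in Set.Ioi 0, f v), C / δ, δ, hδ, fun t ht => ?_⟩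
  have hsplit : ∫ v in Set.Ioi 0, f v = (∫ v in Set.Ioc 0 t, f v) + ∫ v in Set.Ioi t, f v := by
    rw [← Set.Ioc_union_Ioi_eq_Ioi ht]
    exact setIntegral_union (Set.Ioc_disjoint_Ioi le_rfl) measurableSet_Ioi
      (hi.mono_set Set.Ioc_subset_Ioi_self) (hi.mono_set (Set.Ioi_subset_Ioi ht))
  beta_reduce
  rw [Polynomial.eval_C, hsplit, sub_add_cancel_left, abs_neg, ← Real.norm_eq_abs]
  calc ‖∫ v in Set.Ioi t, f v‖ ≤ ∫ v in Set.Ioi t, C * Real.exp (-δ * v) := by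
        refine norm_integral_le_of_norm_le ((exp_neg_integrableOn_Ioi t hδ).const_mul C) ?_
        filter_upwards [ae_restrict_mem measurableSet_Ioi] with v hv
        simpa using H v (ht.trans (le_of_lt hv))
    _ = _ := by
        rw [integral_const_mul, integral_exp_mul_Ioi (by linarith)]
        field_simp

theorem ExpPoly.integral {f : ℝ → ℝ} (hf : ExpPoly f) (hm : Measurable f) :
    ExpPoly fun t => ∫ v in Set.Ioc 0 t, f v := by
  obtain ⟨p, hp⟩ := hf
  have hpm : Measurable fun t => p.eval t := p.continuous.measurable
  have hpoly : ExpPoly fun t => ∫ v in Set.Ioc 0 t, p.eval v := by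
    clear hp hpm
    induction p using Polynomial.induction_on' with
    | add p q hp hq =>
      refine (hp.add hq).congr fun t _ => ?_
      simp only [Polynomial.eval_add]
      exact integral_add (p.continuous.integrableOn_Ioc) (q.continuous.integrableOn_Ioc)
    | monomial n a =>
      refine ((expPoly_pow (n + 1)).const_mul (a / (n + 1))).congr fun t ht => ?_
      rw [← intervalIntegral.integral_of_le ht]
      simp
      ring
  refine ((hp.expPoly_integral (hm.sub hpm)).add hpoly).congr fun t ht => ?_
  rw [← integral_add]
  · simp
  · exact (hp.integrableOn (hm.sub hpm)).mono_set Set.Ioc_subset_Ioi_self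
  · exact p.continuous.integrableOn_Ioc

/-- The normalised summatory function `e^{-t} ∑_{n ≤ e^t} c(n)`. -/
noncomputable def expSum (c : ℕ → ℝ) (t : ℝ) : ℝ :=
  (∑ n ∈ Icc 1 ⌊Real.exp t⌋₊, c n) * Real.exp (-t)

theorem measurable_expSum (c : ℕ → ℝ) : Measurable (expSum c) :=
  ((measurable_from_nat (f := fun N => ∑ n ∈ Icc 1 N, c n)).comp
    (Nat.measurable_floor.comp Real.measurable_exp)).mul (Real.measurable_exp.comp measurable_neg)

/-- The change of variables `r = e^t` on a set of logarithms. -/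
theorem setIntegral_exp_image {s : Set ℝ} (hs : MeasurableSet s) (f : ℝ → ℝ) :
    ∫ r in Real.exp '' s, f r = ∫ t in s, Real.exp t * f (Real.exp t) := by
  rw [integral_image_eq_integral_abs_deriv_smul hs
    (fun x _ => (Real.hasDerivAt_exp x).hasDerivWithinAt) Real.exp_injective.injOn]
  simp

theorem exp_image_Ioc (a b : ℝ) :
    Real.exp '' Set.Ioc a b = Set.Ioc (Real.exp a) (Real.exp b) := by
  ext x
  constructor
  · rintro ⟨t, ht, rfl⟩
    exact ⟨Real.exp_lt_exp.2 ht.1, Real.exp_le_exp.2 ht.2⟩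
  · intro hx
    have h0 : 0 < x := (Real.exp_pos a).trans hx.1
    exact ⟨Real.log x, ⟨(Real.lt_log_iff_exp_lt h0).2 hx.1, (Real.log_le_iff_le_exp h0).2 hx.2⟩,
      Real.exp_log h0⟩

theorem exp_image_Ioi (a : ℝ) : Real.exp '' Set.Ioi a = Set.Ioi (Real.exp a) := by
  ext x
  constructor
  · rintro ⟨t, ht, rfl⟩
    exact Real.exp_lt_exp.2 ht
  · intro hx
    have h0 : 0 < x := (Real.exp_pos a).trans hx
    exact ⟨Real.log x, (Real.lt_log_iff_exp_lt h0).2 hx, Real.exp_log h0⟩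

theorem hasDerivAt_log_pow_div (j : ℕ) {u : ℝ} (hu : 0 < u) :
    HasDerivAt (fun u => Real.log u ^ j / u)
      ((j * Real.log u ^ (j - 1) - Real.log u ^ j) / u ^ 2) u := by
  convert! ((Real.hasDerivAt_log hu.ne').pow j).div (hasDerivAt_id u) hu.ne' using 1
  simp
  field_simp

/-- Abel summation against `(log n)^j / n`, in logarithmic coordinates. -/
theorem sum_log_pow_div_mul {c : ℕ → ℝ} (hc : c 0 = 0) (j : ℕ) (t : ℝ) :
    ∑ n ∈ Icc 1 ⌊Real.exp t⌋₊, Real.log n ^ j / n * c n =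
      t ^ j * expSum c t - ∫ v in Set.Ioc 0 t, (j * v ^ (j - 1) - v ^ j) * expSum c v := by
  have hsum (g : ℕ → ℝ) (N : ℕ) (hg : g 0 = 0) : ∑ n ∈ Icc 0 N, g n = ∑ n ∈ Icc 1 N, g n := by
    rw [Icc_eq_cons_Ioc (Nat.zero_le _), sum_cons, hg, zero_add]
    rfl
  have hd (u : ℝ) (hu : u ∈ Set.Icc 1 (Real.exp t)) :=
    hasDerivAt_log_pow_div j (zero_lt_one.trans_le hu.1)
  have hcont : ContinuousOn
      (fun u => (j * Real.log u ^ (j - 1) - Real.log u ^ j) / u ^ 2) (Set.Icc 1 (Real.exp t)) := by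
    have h0 : ∀ u ∈ Set.Icc 1 (Real.exp t), u ≠ 0 := fun u hu => (zero_lt_one.trans_le hu.1).ne'
    have hl : ContinuousOn Real.log (Set.Icc 1 (Real.exp t)) := continuousOn_id.log h0
    exact ((continuousOn_const.mul (hl.pow _)).sub (hl.pow _)).div (continuousOn_id.pow 2)
      fun u hu => pow_ne_zero 2 (h0 u hu)
  have key := sum_mul_eq_sub_integral_mul₀ c (f := fun u => Real.log u ^ j / u) hc (Real.exp t)
    (fun u hu => (hd u hu).differentiableAt)
    ((hcont.integrableOn_Icc).congr_fun (fun u hu => (hd u hu).deriv.symm) measurableSet_Icc)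
  rw [hsum _ _ (by simp)] at key
  rw [key, hsum _ _ hc, Real.log_exp, expSum, Real.exp_neg]
  congr 1
  · ring
  rw [← Real.exp_zero, ← exp_image_Ioc, setIntegral_exp_image measurableSet_Ioc]
  refine setIntegral_congr_fun measurableSet_Ioc fun v _ => ?_
  rw [(hasDerivAt_log_pow_div j (Real.exp_pos v)).deriv, hsum _ _ hc, Real.log_exp, expSum,
    Real.exp_neg]
  field_simp

theorem ExpPoly.sum_log_pow_div_mul {c : ℕ → ℝ} (hc : c 0 = 0) (h : ExpPoly (expSum c)) (j : ℕ) :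
    ExpPoly fun t => ∑ n ∈ Icc 1 ⌊Real.exp t⌋₊, Real.log n ^ j / n * c n := by
  refine (((expPoly_pow j).mul h).sub (ExpPoly.integral (f := fun v =>
    (j * v ^ (j - 1) - v ^ j) * expSum c v) ?_ ?_)).congr fun t _ =>
    _root_.sum_log_pow_div_mul hc j t
  · exact (((expPoly_pow (j - 1)).const_mul j).sub (expPoly_pow j)).mul h
  · have := measurable_expSum c
    fun_prop

/-- Dirichlet's hyperbola method for a convolution with `ζ`. -/
theorem sum_Ioc_mul_zeta_hyperbola (f : ArithmeticFunction ℕ) {N m : ℕ} (h1 : m * m ≤ N)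
    (h2 : N < (m + 1) * (m + 1)) :
    ∑ n ∈ Ioc 0 N, (f * ArithmeticFunction.zeta) n =
      ∑ b ∈ Ioc 0 m, ∑ a ∈ Ioc 0 (N / b), f a + ∑ a ∈ Ioc 0 m, f a * (N / a - m) := by
  rw [ArithmeticFunction.sum_Ioc_mul_eq_sum_prod_filter,
    ← sum_filter_add_sum_filter_not _ fun x : ℕ × ℕ => x.2 ≤ m]
  congr 1
  · rw [sum_sigma' (Ioc 0 m) (fun b => Ioc 0 (N / b)) fun _ a => f a]
    refine sum_nbij' (fun x => ⟨x.2, x.1⟩) (fun y => (y.2, y.1)) ?_ ?_ ?_ ?_ ?_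
    · rintro ⟨a, b⟩ h
      simp only [mem_filter, mem_product, mem_Ioc, mem_sigma] at h ⊢
      exact ⟨⟨h.1.1.2.1, h.2⟩, h.1.1.1.1, (Nat.le_div_iff_mul_le h.1.1.2.1).2 h.1.2⟩
    · rintro ⟨b, a⟩ h
      simp only [mem_filter, mem_product, mem_Ioc, mem_sigma] at h ⊢
      have := (Nat.le_div_iff_mul_le h.1.1).1 h.2.2
      refine ⟨⟨⟨⟨h.2.1, ?_⟩, h.1.1, ?_⟩, this⟩, h.1.2⟩ <;> nlinarith
    · rintro ⟨a, b⟩ _; rfl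
    · rintro ⟨b, a⟩ _; rfl
    · rintro ⟨a, b⟩ h
      simp only [mem_filter, mem_product, mem_Ioc] at h
      simp [ArithmeticFunction.zeta_apply, h.1.1.2.1.ne']
  · have hcard (a : ℕ) : f a * (N / a - m) = ∑ _b ∈ Ioc m (N / a), f a := by
      simp [mul_comm]
    simp_rw [hcard]
    rw [sum_sigma' (Ioc 0 m) (fun a => Ioc m (N / a)) fun a _ => f a]
    refine sum_nbij' (fun x => ⟨x.1, x.2⟩) (fun y => (y.1, y.2)) ?_ ?_ ?_ ?_ ?_
    · rintro ⟨a, b⟩ h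
      simp only [mem_filter, mem_product, mem_Ioc, mem_sigma, not_le] at h ⊢
      refine ⟨⟨h.1.1.1.1, ?_⟩, h.2, (Nat.le_div_iff_mul_le h.1.1.1.1).2 (by nlinarith)⟩
      by_contra! hcon
      nlinarith
    · rintro ⟨a, b⟩ h
      simp only [mem_filter, mem_product, mem_Ioc, mem_sigma, not_le] at h ⊢
      have := (Nat.le_div_iff_mul_le h.1.1).1 h.2.2
      refine ⟨⟨⟨⟨h.1.1, ?_⟩, by omega, ?_⟩, by nlinarith⟩, h.2.1⟩ <;> nlinarith
    · rintro ⟨a, b⟩ _; rfl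
    · rintro ⟨b, a⟩ _; rfl
    · rintro ⟨a, b⟩ h
      simp only [mem_filter, mem_product, mem_Ioc] at h
      simp [ArithmeticFunction.zeta_apply, h.1.1.2.1.ne']

theorem sum_Icc_zeta (N : ℕ) : ∑ n ∈ Icc 1 N, (ArithmeticFunction.zeta n : ℝ) = N :=
  mod_cast ArithmeticFunction.sum_Ioc_zeta N

theorem expPoly_expSum_zeta : ExpPoly (expSum fun n => (ArithmeticFunction.zeta n : ℝ)) := by
  refine ⟨1, 1, 1, one_pos, fun t _ => ?_⟩
  have h1 := Nat.floor_le (Real.exp_pos t).le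
  have h2 := Nat.lt_floor_add_one (Real.exp t)
  have h3 : Real.exp t * Real.exp (-t) = 1 := by rw [← Real.exp_add]; simp
  have h4 := Real.exp_pos (-t)
  simp only [expSum, sum_Icc_zeta, Polynomial.eval_one, one_mul]
  rw [abs_le]
  constructor <;> nlinarith

theorem expPoly_sum_log_pow_div (j : ℕ) :
    ExpPoly fun t => ∑ b ∈ Icc 1 ⌊Real.exp (t / 2)⌋₊, Real.log b ^ j / b := by
  refine (ExpPoly.sum_log_pow_div_mul (by simp) expPoly_expSum_zeta j).comp_half.congr
    fun t _ => sum_congr rfl fun b hb => ?_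
  rw [ArithmeticFunction.zeta_apply_ne (by simp at hb; omega)]
  simp

theorem log_le_of_mem_Icc_floor_exp {b : ℕ} {u : ℝ} (hb : b ∈ Icc 1 ⌊Real.exp u⌋₊) :
    Real.log b ≤ u := by
  have hb' := mem_Icc.1 hb
  have h0 : (0 : ℝ) < b := by exact_mod_cast hb'.1
  exact (Real.log_le_iff_le_exp h0).2 ((Nat.le_floor_iff (Real.exp_pos u).le).1 hb'.2)

theorem expPoly_sum_eval_sub_log (p : Polynomial ℝ) :
    ExpPoly fun t => ∑ b ∈ Icc 1 ⌊Real.exp (t / 2)⌋₊, p.eval (t - Real.log b) / b := by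
  induction p using Polynomial.induction_on' with
  | add p q hp hq =>
    refine (hp.add hq).congr fun t _ => ?_
    simp [add_div, sum_add_distrib]
  | monomial n a =>
    have h : ExpPoly fun t => ∑ i ∈ range (n + 1), (a * (n.choose i * (-1) ^ (n - i))) *
        (t ^ i * ∑ b ∈ Icc 1 ⌊Real.exp (t / 2)⌋₊, Real.log b ^ (n - i) / b) :=
      ExpPoly.sum _ fun i _ => ((expPoly_pow i).mul (expPoly_sum_log_pow_div _)).const_mul _
    refine h.congr fun t _ => ?_
    simp_rw [mul_sum]
    rw [sum_comm]
    refine sum_congr rfl fun b _ => ?_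
    rw [Polynomial.eval_monomial, sub_eq_add_neg, add_pow, mul_sum, sum_div]
    refine sum_congr rfl fun i _ => ?_
    rw [neg_pow]
    ring

theorem ExpPoly.sum_comp_sub_log {g : ℝ → ℝ} (hg : ExpPoly g) :
    ExpPoly fun t => ∑ b ∈ Icc 1 ⌊Real.exp (t / 2)⌋₊, g (t - Real.log b) / b := by
  obtain ⟨p, hp⟩ := hg
  obtain ⟨C, δ, hC, hδ, H⟩ := hp.exists_pos
  have herr : ExpDecay fun t => ∑ b ∈ Icc 1 ⌊Real.exp (t / 2)⌋₊,
      (g (t - Real.log b) - p.eval (t - Real.log b)) / b := by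
    refine (((expDecay_exp (half_pos hδ)).mul_expPoly (expPoly_sum_log_pow_div 0)).const_mul
      C).mono fun t ht => ?_
    refine (abs_sum_le_sum_abs _ _).trans (le_trans
      (b := ∑ b ∈ Icc 1 ⌊Real.exp (t / 2)⌋₊, C * (Real.exp (-(δ / 2 * t)) * (1 / b))) ?_ ?_)
    · refine sum_le_sum fun b hb => ?_
      have hlog := log_le_of_mem_Icc_floor_exp hb
      rw [abs_div, Nat.abs_cast, ← mul_assoc, mul_one_div]
      gcongr
      refine (H _ (by linarith)).trans ?_
      refine mul_le_mul_of_nonneg_left (Real.exp_le_exp.2 ?_) hC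
      nlinarith
    · refine le_of_eq_of_le ?_ (le_abs_self _)
      simp [mul_sum]
  refine (herr.expPoly.add (expPoly_sum_eval_sub_log p)).congr fun t _ => ?_
  rw [← sum_add_distrib]
  exact sum_congr rfl fun b _ => by ring

theorem dk_zero_right (k : ℕ) : dk k 0 = 0 := by simp [dk]

theorem expSum_div (c : ℕ → ℝ) (t : ℝ) {b : ℕ} (hb : 0 < b) :
    expSum c (t - Real.log b) / b =
      (∑ a ∈ Icc 1 (⌊Real.exp t⌋₊ / b), c a) * Real.exp (-t) := by
  have hb' : (0 : ℝ) < b := by exact_mod_cast hb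
  rw [expSum, Real.exp_sub, neg_sub, Real.exp_sub, Real.exp_log hb', Nat.floor_div_natCast,
    Real.exp_neg]
  field_simp

theorem expSum_dk_succ (k : ℕ) (t : ℝ) :
    expSum (fun n => (dk (k + 1) n : ℝ)) t =
      ∑ b ∈ Icc 1 ⌊Real.exp (t / 2)⌋₊, expSum (fun n => (dk k n : ℝ)) (t - Real.log b) / b +
      (∑ a ∈ Icc 1 ⌊Real.exp (t / 2)⌋₊, (dk k a : ℝ) * (⌊Real.exp t⌋₊ / a : ℕ)) * Real.exp (-t) -
      expSum (fun n => (dk k n : ℝ)) (t / 2) *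
        expSum (fun n => (ArithmeticFunction.zeta n : ℝ)) (t / 2) := by
  set N := ⌊Real.exp t⌋₊ with hN
  set m := ⌊Real.exp (t / 2)⌋₊ with hm
  have hx : Real.exp t = Real.exp (t / 2) * Real.exp (t / 2) := by
    rw [← Real.exp_add, add_halves]
  have hm1 := Nat.floor_le (Real.exp_pos (t / 2)).le
  have hm2 := Nat.lt_floor_add_one (Real.exp (t / 2))
  have hpos := Real.exp_pos (t / 2)
  rw [← hm] at hm1 hm2
  have h1 : m * m ≤ N := by
    rw [hN, Nat.le_floor_iff (Real.exp_pos t).le, hx]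
    push_cast
    gcongr
  have h2 : N < (m + 1) * (m + 1) := by
    rw [hN, Nat.floor_lt (Real.exp_pos t).le, hx]
    push_cast
    gcongr
  have key := sum_Ioc_mul_zeta_hyperbola (ArithmeticFunction.zeta ^ k) h1 h2
  have key' : ∑ n ∈ Icc 1 N, (dk (k + 1) n : ℝ) =
      ∑ b ∈ Icc 1 m, ∑ a ∈ Icc 1 (N / b), (dk k a : ℝ) +
        ∑ a ∈ Icc 1 m, (dk k a : ℝ) * ((N / a : ℕ) - m) := by
    have h3 : ∑ a ∈ Icc 1 m, (dk k a : ℝ) * ((N / a : ℕ) - m) =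
        ((∑ a ∈ Icc 1 m, dk k a * (N / a - m) : ℕ) : ℝ) := by
      push_cast
      refine sum_congr rfl fun a ha => ?_
      have ha' := mem_Icc.1 ha
      rw [Nat.cast_sub ((Nat.le_div_iff_mul_le ha'.1).2 (by nlinarith))]
    rw [h3]
    exact_mod_cast key
  have h4 : ∑ b ∈ Icc 1 m, expSum (fun n => (dk k n : ℝ)) (t - Real.log b) / b =
      (∑ b ∈ Icc 1 m, ∑ a ∈ Icc 1 (N / b), (dk k a : ℝ)) * Real.exp (-t) := by
    rw [sum_mul]
    exact sum_congr rfl fun b hb => expSum_div _ _ (mem_Icc.1 hb).1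
  rw [h4, expSum, ← hN, key', expSum, expSum, ← hm, sum_Icc_zeta]
  have hx' : Real.exp (-t) = Real.exp (-(t / 2)) * Real.exp (-(t / 2)) := by
    rw [← Real.exp_add]; ring_nf
  simp only [mul_sub, sum_sub_distrib, ← sum_mul]
  rw [hx']
  ring

/-- Piltz's divisor problem with some power saving and an unspecified main term. -/
theorem expPoly_expSum_dk (k : ℕ) : ExpPoly (expSum fun n => (dk k n : ℝ)) := by
  induction k with
  | zero =>
    refine (expDecay_exp one_pos).expPoly.congr fun t ht => ?_
    simp [expSum, dk, ArithmeticFunction.one_apply, ht]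
  | succ k ih =>
    have hw : ExpPoly fun t => ∑ a ∈ Icc 1 ⌊Real.exp (t / 2)⌋₊, 1 / (a : ℝ) * dk k a := by
      refine (ExpPoly.sum_log_pow_div_mul (by simp [dk_zero_right]) ih 0).comp_half.congr
        fun t _ => ?_
      simp
    have herr : ExpDecay fun t => (∑ a ∈ Icc 1 ⌊Real.exp (t / 2)⌋₊,
        (dk k a : ℝ) * (⌊Real.exp t⌋₊ / a : ℕ)) * Real.exp (-t) -
        ∑ a ∈ Icc 1 ⌊Real.exp (t / 2)⌋₊, 1 / (a : ℝ) * dk k a := by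
      refine ((expDecay_exp (half_pos one_pos)).mul_expPoly ih.comp_half).mono fun t ht => ?_
      have hx : Real.exp (-(1 / 2 * t)) * Real.exp (-(t / 2)) = Real.exp (-t) := by
        rw [← Real.exp_add]; ring_nf
      rw [sum_mul, ← sum_sub_distrib]
      refine (abs_sum_le_sum_abs _ _).trans (le_trans
        (b := ∑ a ∈ Icc 1 ⌊Real.exp (t / 2)⌋₊, (dk k a : ℝ) * Real.exp (-t)) ?_ ?_)
      · refine sum_le_sum fun a ha => ?_
        have ha0 : (0 : ℝ) < a := by exact_mod_cast (mem_Icc.1 ha).1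
        have h3 : Real.exp t * Real.exp (-t) = 1 := by rw [← Real.exp_add]; simp
        rw [← Nat.floor_div_natCast]
        have h1 := Nat.floor_le (div_pos (Real.exp_pos t) ha0).le
        have h2 := Nat.lt_floor_add_one (Real.exp t / a)
        have h5 : (dk k a : ℝ) * ⌊Real.exp t / a⌋₊ * Real.exp (-t) - 1 / a * dk k a =
            -(dk k a * Real.exp (-t)) * (Real.exp t / a - ⌊Real.exp t / a⌋₊) := by
          linear_combination ((dk k a : ℝ) / a) * h3
        rw [h5, abs_mul, abs_neg, abs_of_nonneg (by positivity)]
        refine mul_le_of_le_one_right (by positivity) ?_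
        rw [abs_le]
        constructor <;> linarith
      · refine le_of_eq_of_le ?_ (le_abs_self _)
        rw [← sum_mul, expSum, ← hx]
        ring
    refine ((ih.sum_comp_sub_log.add (herr.expPoly.add hw)).sub
      (ih.comp_half.mul expPoly_expSum_zeta.comp_half)).congr fun t _ => ?_
    rw [expSum_dk_succ]
    ring

theorem integral_pow_mul_exp_neg {δ : ℝ} (hδ : 0 < δ) (m : ℕ) :
    ∫ t in Set.Ioi 0, t ^ m * Real.exp (-(δ * t)) = m.factorial / δ ^ (m + 1) := by
  have h := Real.integral_rpow_mul_exp_neg_mul_Ioi (a := m + 1) (by positivity) hδ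
  rw [Real.Gamma_nat_eq_factorial, add_sub_cancel_right] at h
  simp only [Real.rpow_natCast] at h
  rw [h, ← Nat.cast_add_one, Real.rpow_natCast, one_div_pow]
  ring

theorem integrableOn_pow_mul_exp_neg {δ : ℝ} (hδ : 0 < δ) (m : ℕ) :
    IntegrableOn (fun t => t ^ m * Real.exp (-(δ * t))) (Set.Ioi 0) :=
  (((expDecay_exp hδ).mul_pow m).congr fun t _ => mul_comm _ _).integrableOn (by fun_prop)

theorem integral_norm_mul_pow_le {h : ℝ → ℝ} {C δ : ℝ} (hδ : 0 < δ)
    (H : ∀ t, 0 ≤ t → |h t| ≤ C * Real.exp (-(δ * t))) (m : ℕ) :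
    ∫ t in Set.Ioi 0, ‖h t * t ^ m‖ ≤ C * (m.factorial / δ ^ (m + 1)) := by
  rw [← integral_pow_mul_exp_neg hδ, ← integral_const_mul]
  refine integral_mono_of_nonneg (Eventually.of_forall fun t => norm_nonneg _)
    ((integrableOn_pow_mul_exp_neg hδ m).const_mul C) ?_
  filter_upwards [ae_restrict_mem measurableSet_Ioi] with t ht
  have ht' : 0 ≤ t := le_of_lt ht
  rw [norm_mul, Real.norm_eq_abs, Real.norm_of_nonneg (by positivity)]
  nlinarith [mul_le_mul_of_nonneg_right (H t ht') (pow_nonneg ht' m)]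

/-- Termwise integration of a power series against an exponentially decaying function. -/
theorem hasSum_mul_integral_pow {h : ℝ → ℝ} (hm : Measurable h) {C δ : ℝ} (hδ : 0 < δ)
    (H : ∀ t, 0 ≤ t → |h t| ≤ C * Real.exp (-(δ * t))) {d : ℕ → ℝ}
    (hd : Summable fun m => |d m| * (m.factorial / δ ^ m)) :
    HasSum (fun m => d m * ∫ t in Set.Ioi 0, h t * t ^ m)
      (∫ t in Set.Ioi 0, h t * ∑' m, d m * t ^ m) := by
  have hdec : ExpDecay h := ⟨C, δ, hδ, H⟩
  have key := hasSum_integral_of_summable_integral_norm (μ := volume.restrict (Set.Ioi (0 : ℝ)))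
    (F := fun m t => d m * (h t * t ^ m))
    (fun m => ((hdec.mul_pow m).integrableOn (by fun_prop)).const_mul (d m)) ?_
  · simp only [integral_const_mul] at key
    convert! key using 3
    rw [← tsum_mul_left]
    exact tsum_congr fun m => by ring
  · refine Summable.of_nonneg_of_le (fun m => by positivity) (fun m => ?_) (hd.mul_left (C / δ))
    simp only [norm_mul (d m), integral_const_mul]
    refine (mul_le_mul_of_nonneg_left (integral_norm_mul_pow_le hδ H m) (norm_nonneg _)).trans_eq ?_
    rw [Real.norm_eq_abs, pow_succ]
    field_simp

/-- Uniqueness of power series expansions on a right neighbourhood of `0`. -/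
theorem eq_of_hasSum_pow_eq {a b : ℕ → ℝ} {f : ℝ → ℝ} {ε : ℝ} (hε : 0 < ε)
    (ha : ∀ w, 0 < w → w < ε → HasSum (fun n => a n * w ^ n) (f w))
    (hb : ∀ w, 0 < w → w < ε → HasSum (fun n => b n * w ^ n) (f w)) : a = b := by
  let p := FormalMultilinearSeries.ofScalars ℝ (fun n => a n - b n)
  have hsum (w : ℝ) (h0 : 0 < w) (h1 : w < ε) : HasSum (fun n => (a n - b n) * w ^ n) 0 := by
    simpa [sub_mul] using (ha w h0 h1).sub (hb w h0 h1)
  have hrad : 0 < p.radius := by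
    refine lt_of_lt_of_le (b := ENNReal.ofReal (ε / 2)) (by simpa using hε) ?_
    refine p.le_radius_of_tendsto (r := (ε / 2).toNNReal) (l := 0) ?_
    have := (hsum (ε / 2) (by positivity) (by linarith)).summable.tendsto_atTop_zero.norm
    simpa [p, FormalMultilinearSeries.ofScalars_norm, abs_mul, abs_of_pos hε,
      Real.coe_toNNReal _ (half_pos hε).le] using this
  have hp : HasFPowerSeriesAt p.sum p 0 := (p.hasFPowerSeriesOnBall hrad).hasFPowerSeriesAt
  have hfreq : ∃ᶠ w in 𝓝[≠] (0 : ℝ), p.sum w = 0 := by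
    have hev : ∀ᶠ w in 𝓝[>] (0 : ℝ), p.sum w = 0 := by
      filter_upwards [Ioo_mem_nhdsGT hε] with w hw
      rw [FormalMultilinearSeries.sum]
      simpa [p, FormalMultilinearSeries.ofScalars_apply_eq, mul_comm] using
        (hsum w hw.1 hw.2).tsum_eq
    exact hev.frequently.filter_mono (nhdsWithin_mono _ fun x hx => ne_of_gt hx)
  have hev := hp.analyticAt.frequently_zero_iff_eventually_zero.1 hfreq
  have hp0 : p = 0 := (hp.congr hev).eq_zero
  funext n
  have := congrArg (fun q : FormalMultilinearSeries ℝ ℝ ℝ => q.coeff n) hp0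
  have h0 : (0 : FormalMultilinearSeries ℝ ℝ ℝ).coeff n = 0 := rfl
  simpa [p, FormalMultilinearSeries.coeff_ofScalars, h0, sub_eq_zero] using this

theorem LSeries_dk (k : ℕ) {s : ℂ} (hs : 1 < s.re) :
    LSeriesSummable (fun n => (dk k n : ℂ)) s ∧
      LSeries (fun n => (dk k n : ℂ)) s = riemannZeta s ^ k := by
  have hcoe (k : ℕ) : (fun n => (dk k n : ℂ)) =
      fun n => ((ArithmeticFunction.zeta : ArithmeticFunction ℂ) ^ k) n := by
    funext n
    induction k generalizing n with
    | zero => simp [dk, ArithmeticFunction.one_apply]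
    | succ k ih =>
      rw [pow_succ, ArithmeticFunction.mul_apply, dk, pow_succ, ArithmeticFunction.mul_apply]
      push_cast
      exact sum_congr rfl fun x _ => by rw [← ih]; simp [dk]
  have hζ : (fun n => (ArithmeticFunction.zeta n : ℂ)) =
      fun n => (ArithmeticFunction.zeta : ArithmeticFunction ℂ) n := by
    funext n; simp
  rw [hcoe]
  have hz := ArithmeticFunction.LSeriesSummable_zeta_iff.2 hs
  have hz' := ArithmeticFunction.LSeries_zeta_eq_riemannZeta hs
  rw [hζ] at hz hz'
  induction k with
  | zero =>
    have h1 : (fun n => ((ArithmeticFunction.zeta : ArithmeticFunction ℂ) ^ 0) n) =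
        LSeries.delta := by
      rw [pow_zero]; exact ArithmeticFunction.one_eq_delta
    rw [h1]
    refine ⟨?_, by simp [LSeries_delta]⟩
    rw [LSeriesSummable, funext (LSeries.term_delta s)]
    exact (hasSum_ite_eq 1 (1 : ℂ)).summable
  | succ k ih =>
    rw [pow_succ]
    exact ⟨ArithmeticFunction.LSeriesSummable_mul ih.1 hz, by
      rw [ArithmeticFunction.LSeries_mul' ih.1 hz, ih.2, hz', pow_succ]⟩

theorem sum_dk_isBigO (k : ℕ) {η : ℝ} (hη : 0 < η) :
    (fun n : ℕ => ∑ m ∈ Icc 1 n, (dk k m : ℝ)) =O[atTop] fun n : ℕ => (n : ℝ) ^ (1 + η) := by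
  obtain ⟨C, δ, hC, hδ, H⟩ :=
    ((expDecay_exp hη).mul_expPoly (expPoly_expSum_dk k)).exists_pos
  refine IsBigO.of_bound C ?_
  filter_upwards [eventually_ge_atTop 1] with n hn
  have hn0 : (0 : ℝ) < n := by exact_mod_cast hn
  have hlog : 0 ≤ Real.log n := Real.log_nonneg (by exact_mod_cast hn)
  have h := H (Real.log n) hlog
  rw [expSum, Real.exp_log hn0, Nat.floor_natCast] at h
  have h1 : Real.exp (-(δ * Real.log n)) ≤ 1 := Real.exp_le_one_iff.2 (by nlinarith)
  have h2 : (n : ℝ) ^ (1 + η) * (Real.exp (-(η * Real.log n)) * Real.exp (-Real.log n)) = 1 := by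
    rw [Real.rpow_def_of_pos hn0, ← Real.exp_add, ← Real.exp_add]
    ring_nf
    simp
  have hS : 0 ≤ ∑ m ∈ Icc 1 n, (dk k m : ℝ) := by positivity
  have hr : 0 ≤ (n : ℝ) ^ (1 + η) := by positivity
  rw [Real.norm_of_nonneg hS, Real.norm_of_nonneg hr]
  have h3 : Real.exp (-(η * Real.log n)) *
      ((∑ m ∈ Icc 1 n, (dk k m : ℝ)) * Real.exp (-Real.log n)) ≤ C :=
    (le_abs_self _).trans (h.trans (mul_le_of_le_one_right hC h1))
  calc ∑ m ∈ Icc 1 n, (dk k m : ℝ) = (n : ℝ) ^ (1 + η) * (Real.exp (-(η * Real.log n)) *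
      ((∑ m ∈ Icc 1 n, (dk k m : ℝ)) * Real.exp (-Real.log n))) := by
        linear_combination (-(∑ m ∈ Icc 1 n, (dk k m : ℝ))) * h2
    _ ≤ (n : ℝ) ^ (1 + η) * C := by gcongr
    _ = _ := mul_comm _ _

theorem ofReal_laplace_expSum_dk (k : ℕ) {w : ℝ} (hw : 0 < w) :
    (((1 + w) * ∫ t in Set.Ioi 0, expSum (fun n => (dk k n : ℝ)) t * Real.exp (-(w * t)) : ℝ) : ℂ) =
      riemannZeta (1 + w) ^ k := by
  have hs : (1 + w / 2 : ℝ) < (1 + w : ℂ).re := by simp; linarith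
  have key := LSeries_eq_mul_integral_of_nonneg (fun n => (dk k n : ℝ)) (by positivity) hs
    (sum_dk_isBigO k (half_pos hw)) fun n => by positivity
  have hL := (LSeries_dk k (s := 1 + w) (by simpa using hw)).2
  simp only [ofReal_natCast] at key
  rw [hL] at key
  rw [key]
  push_cast
  congr 1
  have h1 : ∀ r ∈ Set.Ioi (1 : ℝ),
      (∑ m ∈ Icc 1 ⌊r⌋₊, (dk k m : ℂ)) * (r : ℂ) ^ (-((1 + w : ℂ) + 1)) =
      (((∑ m ∈ Icc 1 ⌊r⌋₊, (dk k m : ℝ)) * r ^ (-(1 + w + 1)) : ℝ) : ℂ) := by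
    intro r hr
    have hr0 : (0 : ℝ) ≤ r := zero_le_one.trans (le_of_lt hr)
    push_cast [ofReal_cpow hr0]
    rfl
  rw [setIntegral_congr_fun measurableSet_Ioi h1, integral_complex_ofReal,
    show Set.Ioi (1 : ℝ) = Real.exp '' Set.Ioi 0 by rw [exp_image_Ioi, Real.exp_zero],
    setIntegral_exp_image measurableSet_Ioi, ofReal_inj]
  refine setIntegral_congr_fun measurableSet_Ioi fun t _ => ?_
  rw [expSum, ← Real.exp_mul, mul_assoc, ← Real.exp_add, mul_left_comm, ← Real.exp_add]
  ring_nf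

theorem differentiable_zetaPowAux (k : ℕ) : Differentiable ℂ (zetaPowAux k) := by
  have hne (s : ℂ) (hs : s ≠ 1) : DifferentiableAt ℂ (zetaPowAux k) s := by
    have h : (fun s : ℂ => ((s - 1) * riemannZeta s) ^ k) =ᶠ[𝓝 s] zetaPowAux k := by
      filter_upwards [isOpen_ne.mem_nhds hs] with z hz
      rw [zetaPowAux, Function.update_of_ne hz]
    refine DifferentiableAt.congr_of_eventuallyEq ?_ h.symm
    have := differentiableAt_riemannZeta hs
    fun_prop
  intro s
  rcases eq_or_ne s 1 with rfl | hs
  · refine (analyticAt_of_differentiable_on_punctured_nhds_of_continuousAt ?_ ?_).differentiableAt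
    · filter_upwards [self_mem_nhdsWithin] with z hz using hne z hz
    · rw [zetaPowAux, continuousAt_update_same]
      simpa using riemannZeta_residue_one.pow k
  · exact hne s hs

theorem hasSum_lam (k : ℕ) (w : ℝ) :
    HasSum (fun j => lam k j / j.factorial * w ^ j) (zetaPowAux k (1 + w)).re := by
  have h := hasSum_re (hasSum_taylorSeries_of_entire (differentiable_zetaPowAux k) 1 (1 + w))
  convert! h using 2 with j
  have e : ((j.factorial : ℂ)⁻¹ • ((1 + w : ℂ) - 1) ^ j • iteratedDeriv j (zetaPowAux k) 1) =
      ((w ^ j / j.factorial : ℝ) : ℂ) * iteratedDeriv j (zetaPowAux k) 1 := by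
    push_cast
    simp
    ring
  rw [e, re_ofReal_mul, lam]
  ring

theorem laplace_expSum_dk (k : ℕ) {w : ℝ} (hw : 0 < w) :
    w ^ k * ((1 + w) *
      ∫ t in Set.Ioi 0, expSum (fun n => (dk k n : ℝ)) t * Real.exp (-(w * t))) =
        (zetaPowAux k (1 + w)).re := by
  have hne : (1 + w : ℂ) ≠ 1 := by simpa using hw.ne'
  rw [zetaPowAux, Function.update_of_ne hne, mul_pow, ← ofReal_laplace_expSum_dk k hw,
    add_sub_cancel_left, ← ofReal_pow, ← ofReal_mul, ofReal_re]

/-- The alternating partial sums `b n - b (n-1) + ... ± b 0`, i.e. the coefficients of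
`(∑ b n wⁿ) / (1 + w)`. -/
noncomputable def altSum (b : ℕ → ℝ) (n : ℕ) : ℝ :=
  (-1 : ℝ) ^ n * ∑ i ∈ range (n + 1), (-1 : ℝ) ^ i * b i

theorem altSum_zero (b : ℕ → ℝ) : altSum b 0 = b 0 := by simp [altSum]

theorem altSum_succ (b : ℕ → ℝ) (n : ℕ) : altSum b (n + 1) = b (n + 1) - altSum b n := by
  have h : (-1 : ℝ) ^ n * (-1 : ℝ) ^ n = 1 := by rw [← mul_pow]; simp
  rw [altSum, altSum, sum_range_succ _ (n + 1)]
  linear_combination b (n + 1) * h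

theorem coeff_eq_of_hasSum_mul {ε : ℝ} (hε : 0 < ε) {e b : ℕ → ℝ} {f g : ℝ → ℝ} (M : ℕ)
    (he : ∀ w, 0 < w → w < ε → HasSum (fun n => e n * w ^ n) (f w))
    (hb : ∀ w, 0 < w → w < ε → HasSum (fun n => b n * w ^ n) (g w))
    (hfg : ∀ w, 0 < w → w < ε → (1 + w) * f w = w ^ (M + 1) * g w) :
    (∀ n ≤ M, e n = 0) ∧ ∀ n, e (n + (M + 1)) = altSum b n := by
  have h1 : (fun n => e n + if n = 0 then 0 else e (n - 1)) =
      fun n => if n < M + 1 then 0 else b (n - (M + 1)) := by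
    refine eq_of_hasSum_pow_eq (f := fun w => (1 + w) * f w) hε (fun w h0 h1 => ?_)
      fun w h0 h1 => ?_
    · have hs : HasSum (fun n => (if n = 0 then 0 else e (n - 1)) * w ^ n) (w * f w) := by
        have := (hasSum_nat_add_iff (f := fun n => (if n = 0 then 0 else e (n - 1)) * w ^ n)
          (g := w * f w) 1).1
          (by convert! (he w h0 h1).mul_left w using 2 with n; simp; ring)
        simpa using this
      rw [one_add_mul]
      convert! (he w h0 h1).add hs using 2
      ring
    · have := (hasSum_nat_add_iff
        (f := fun n => (if n < M + 1 then 0 else b (n - (M + 1))) * w ^ n)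
        (g := w ^ (M + 1) * g w) (M + 1)).1
        (by convert! (hb w h0 h1).mul_left (w ^ (M + 1)) using 2 with n
            rw [if_neg (by omega), Nat.add_sub_cancel]; ring)
      rw [sum_eq_zero, add_zero] at this
      · rwa [hfg w h0 h1]
      · intro n hn
        simp [mem_range.1 hn]
  have h2 (n : ℕ) := congrFun h1 n
  have h3 : ∀ n ≤ M, e n = 0 := by
    intro n
    induction n with
    | zero => intro _; simpa using h2 0
    | succ n ih =>
      intro hn
      have := h2 (n + 1)
      simpa [ih (by omega), show n < M by omega] using this
  refine ⟨h3, fun n => ?_⟩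
  induction n with
  | zero =>
    have := h2 (0 + (M + 1))
    rw [altSum_zero]
    simpa [h3 M le_rfl] using this
  | succ n ih =>
    have := h2 (n + 1 + (M + 1))
    rw [if_neg (by omega), if_neg (by omega), Nat.add_sub_cancel,
      show n + 1 + (M + 1) - 1 = n + (M + 1) by omega, ih] at this
    rw [altSum_succ]
    linarith

theorem hasSum_laplace {h : ℝ → ℝ} {C δ w : ℝ} (hm : Measurable h) (hδ : 0 < δ)
    (H : ∀ t, 0 ≤ t → |h t| ≤ C * Real.exp (-(δ * t))) (hw : 0 < w) (hwδ : w < δ) :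
    HasSum (fun m : ℕ => ((-1) ^ m / m.factorial * ∫ t in Set.Ioi 0, h t * t ^ m) * w ^ m)
      (∫ t in Set.Ioi 0, h t * Real.exp (-(w * t))) := by
  have hd : Summable fun m : ℕ =>
      |(-w) ^ m / m.factorial| * (m.factorial / δ ^ m) := by
    have := summable_geometric_of_lt_one (r := w / δ) (by positivity) ((div_lt_one hδ).2 hwδ)
    refine this.congr fun m => ?_
    have : (m.factorial : ℝ) ≠ 0 := by positivity
    rw [abs_div, abs_pow, abs_neg, abs_of_pos hw, Nat.abs_cast, div_pow]
    field_simp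
  convert! hasSum_mul_integral_pow hm hδ H hd using 1
  · ext m
    rw [neg_pow]; ring
  · congr 1 with t
    rw [Real.exp_eq_exp_ℝ, NormedSpace.exp_eq_tsum_div]
    refine congrArg _ (tsum_congr fun m => ?_)
    rw [← neg_mul, mul_pow]; ring

theorem laplace_eval (q : Polynomial ℝ) {N : ℕ} (hN : q.natDegree < N) {w : ℝ} (hw : 0 < w) :
    IntegrableOn (fun t => q.eval t * Real.exp (-(w * t))) (Set.Ioi 0) ∧
    ∫ t in Set.Ioi 0, q.eval t * Real.exp (-(w * t)) =
      ∑ j ∈ range N, q.coeff j * (j.factorial / w ^ (j + 1)) := by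
  have e : (fun t => q.eval t * Real.exp (-(w * t))) =
      fun t => ∑ j ∈ range N, q.coeff j * (t ^ j * Real.exp (-(w * t))) := by
    ext t
    rw [Polynomial.eval_eq_sum_range' hN, sum_mul]
    exact sum_congr rfl fun j _ => by ring
  have hi (j : ℕ) : IntegrableOn (fun t => q.coeff j * (t ^ j * Real.exp (-(w * t))))
      (Set.Ioi 0) := (integrableOn_pow_mul_exp_neg hw j).const_mul _
  rw [e]
  refine ⟨integrable_finsetSum _ fun j _ => hi j, ?_⟩
  rw [integral_finsetSum _ fun j _ => hi j]
  refine sum_congr rfl fun j _ => ?_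
  rw [integral_const_mul, integral_pow_mul_exp_neg hw]

theorem hasSum_pow_mul_laplace {h g : ℝ → ℝ} {q : Polynomial ℝ} {C δ w : ℝ} {N : ℕ}
    (hg : ∀ t, g t = q.eval t + h t) (hm : Measurable h) (hδ : 0 < δ)
    (H : ∀ t, 0 ≤ t → |h t| ≤ C * Real.exp (-(δ * t))) (hN : q.natDegree < N)
    (hw : 0 < w) (hwδ : w < δ) :
    HasSum (fun n : ℕ => (if n < N then q.coeff (N - 1 - n) * (N - 1 - n).factorial else
      (-1) ^ (n - N) / (n - N).factorial * ∫ t in Set.Ioi 0, h t * t ^ (n - N)) * w ^ n)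
      (w ^ N * ∫ t in Set.Ioi 0, g t * Real.exp (-(w * t))) := by
  obtain ⟨hi, hq⟩ := laplace_eval q hN hw
  have hhi : IntegrableOn (fun t => h t * Real.exp (-(w * t))) (Set.Ioi 0) :=
    (ExpDecay.mul ⟨C, δ, hδ, H⟩ (expDecay_exp hw)).integrableOn (by fun_prop)
  have hL : ∫ t in Set.Ioi 0, g t * Real.exp (-(w * t)) =
      ∑ j ∈ range N, q.coeff j * (j.factorial / w ^ (j + 1)) +
        ∫ t in Set.Ioi 0, h t * Real.exp (-(w * t)) := by
    rw [← hq, ← integral_add hi hhi]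
    simp only [hg, add_mul]
  have hsum := (hasSum_nat_add_iff (f := fun n : ℕ => (if n < N then
      q.coeff (N - 1 - n) * (N - 1 - n).factorial else
      (-1) ^ (n - N) / (n - N).factorial * ∫ t in Set.Ioi 0, h t * t ^ (n - N)) * w ^ n)
    (g := w ^ N * ∫ t in Set.Ioi 0, h t * Real.exp (-(w * t))) N).1 (by
      convert! (hasSum_laplace hm hδ H hw hwδ).mul_left (w ^ N) using 2 with n
      simp; ring)
  convert! hsum using 1
  rw [hL, mul_add, add_comm, mul_sum, ← sum_range_reflect]
  congr 1
  refine sum_congr rfl fun n hn => ?_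
  have hn := mem_range.1 hn
  rw [if_pos hn]
  have e : w ^ N = w ^ n * w ^ (N - 1 - n + 1) := by rw [← pow_add]; congr 1; omega
  rw [e]
  field_simp

/-- The rescaled error term `e⁻ᵗ Δ_k(eᵗ)`. -/
noncomputable def expDelta (k : ℕ) (t : ℝ) : ℝ := Deltak k (Real.exp t) * Real.exp (-t)

theorem aCoef_eq_altSum (k j : ℕ) :
    aCoef k j = altSum (fun i => lam k i / i.factorial) (k - 1 - j) := by
  simp only [aCoef, altSum, mul_div_assoc]

theorem expDelta_bound_and_moments (k : ℕ) :
    Measurable (expDelta k) ∧ ∃ C δ : ℝ, 0 ≤ C ∧ 0 < δ ∧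
      (∀ t, 0 ≤ t → |expDelta k t| ≤ C * Real.exp (-(δ * t))) ∧
      ∀ m : ℕ, (-1) ^ m / m.factorial * ∫ t in Set.Ioi 0, expDelta k t * t ^ m =
        altSum (fun i => lam k i / i.factorial) (m + k) := by
  obtain ⟨q, hq⟩ := expPoly_expSum_dk k
  obtain ⟨C, δ, hC, hδ, H⟩ := hq.exists_pos
  set g := expSum fun n => (dk k n : ℝ) with hg
  have hgm : Measurable g := measurable_expSum _
  have hm : Measurable fun t => g t - q.eval t := by
    have := q.continuous.measurable
    fun_prop
  set M := q.natDegree with hM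
  obtain ⟨hzero, hcoef⟩ := coeff_eq_of_hasSum_mul hδ M
    (fun w h0 h1 => hasSum_pow_mul_laplace (g := g) (N := k + (M + 1)) (fun t => by ring) hm hδ H
      (by omega) h0 h1)
    (fun w _ _ => hasSum_lam k w)
    (fun w h0 _ => by rw [← laplace_expSum_dk k h0, pow_add]; ring)
  have hE : expDelta k = fun t => g t - q.eval t := by
    ext t
    have hexp : Real.exp t * Real.exp (-t) = 1 := by rw [← Real.exp_add]; simp
    have hqe : q.eval t = ∑ j ∈ range k, aCoef k j / j.factorial * t ^ j := by
      rw [Polynomial.eval_eq_sum_range' (n := k + (M + 1)) (by omega),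
        sum_range_add, add_eq_left.2]
      · refine sum_congr rfl fun j hj => ?_
        have hj := mem_range.1 hj
        have := hcoef (k - 1 - j)
        rw [if_pos (by omega), show k + (M + 1) - 1 - (k - 1 - j + (M + 1)) = j by omega,
          ← aCoef_eq_altSum] at this
        rw [← this]
        field_simp
      · refine sum_eq_zero fun j hj => ?_
        have hj := mem_range.1 hj
        have := hzero (M - j) (by omega)
        rw [if_pos (by omega), show k + (M + 1) - 1 - (M - j) = k + j by omega] at this
        have hf : ((k + j).factorial : ℝ) ≠ 0 := by positivity
        rw [(mul_eq_zero.1 this).resolve_right hf, zero_mul]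
    rw [expDelta, Deltak, Real.log_exp, ← hqe, hg, expSum]
    linear_combination (-(q.eval t)) * hexp
  rw [hE]
  refine ⟨hm, C, δ, hC, hδ, H, fun m => ?_⟩
  have := hcoef (m + k)
  rw [if_neg (by omega), show m + k + (M + 1) - (k + (M + 1)) = m by omega] at this
  exact this

theorem sum_choose_succ_mul (a : ℕ → ℝ) (n : ℕ) :
    ∑ j ∈ range (n + 2), ((n + 1).choose j : ℝ) * a j =
      ∑ j ∈ range (n + 1), (n.choose j : ℝ) * (a j + a (j + 1)) := by
  rw [sum_range_succ']
  simp only [Nat.choose_succ_succ, Nat.cast_add, add_mul, sum_add_distrib, mul_add]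
  have h : ∑ j ∈ range (n + 1), (n.choose j : ℝ) * a j =
      ∑ j ∈ range (n + 1), (n.choose (j + 1) : ℝ) * a (j + 1) + a 0 := by
    have := sum_range_succ' (fun j => (n.choose j : ℝ) * a j) (n + 1)
    rw [sum_range_succ] at this
    simpa using this
  rw [h]
  simp
  ring

theorem neg_one_pow_mul_ell (k n : ℕ) :
    (-1 : ℝ) ^ n * ell k n = ∑ j ∈ range (n + 1), (n.choose j : ℝ) *
      altSum (fun i => lam k i / i.factorial) (j + k) := by
  cases n with
  | zero => simp [ell, altSum, mul_div_assoc]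
  | succ n =>
    rw [sum_choose_succ_mul]
    have h : (-1 : ℝ) ^ (n + 1) * (-1 : ℝ) ^ (n + 1) = 1 := by rw [← mul_pow]; simp
    rw [ell, if_pos (by simp), Int.toNat_natCast, ← mul_assoc, h, one_mul,
      ← Ico_add_one_right_eq_Icc, sum_Ico_eq_sum_range]
    refine sum_congr (by simp) fun j _ => ?_
    rw [show j + 1 + k = j + k + 1 by ring, altSum_succ, show 1 + j + k = j + k + 1 by ring]
    simp
    ring

/-- The entire function `∑ (-y)ᵐ / (m!)²`, so that `J₀ (2 √y) = besselAux y` for `y ≥ 0`. -/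
noncomputable def besselAux (y : ℝ) : ℝ :=
  ∑' m : ℕ, (-1) ^ m / (m.factorial : ℝ) ^ 2 * y ^ m

theorem besselJ0_two_mul_sqrt {y : ℝ} (hy : 0 ≤ y) : besselJ0 (2 * √y) = besselAux y := by
  refine tsum_congr fun m => ?_
  rw [mul_div_cancel_left₀ _ two_ne_zero, pow_mul, Real.sq_sqrt hy]
  ring

theorem phik_eq_integral (k : ℕ) {x : ℝ} (hx : 0 ≤ x) :
    phik k x = ∫ t in Set.Ioi 0, expDelta k t * besselAux (x * t) := by
  rw [phik, show Set.Ioi (1 : ℝ) = Real.exp '' Set.Ioi 0 by rw [exp_image_Ioi, Real.exp_zero],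
    setIntegral_exp_image measurableSet_Ioi]
  refine setIntegral_congr_fun measurableSet_Ioi fun t ht => ?_
  have ht : 0 < t := ht
  rw [Real.log_exp, besselJ0_two_mul_sqrt (by positivity), expDelta, Real.exp_neg]
  field_simp

theorem hasSum_phik (k : ℕ) {x : ℝ} (hx : 0 ≤ x) :
    HasSum (fun m : ℕ => altSum (fun i => lam k i / i.factorial) (m + k) * (x ^ m / m.factorial))
      (phik k x) := by
  obtain ⟨hm, C, δ, -, hδ, H, hmom⟩ := expDelta_bound_and_moments k
  have hd : Summable fun m : ℕ =>
      |(-1) ^ m / (m.factorial : ℝ) ^ 2 * x ^ m| * (m.factorial / δ ^ m) := by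
    refine (Real.summable_pow_div_factorial (x / δ)).congr fun m => ?_
    have : (m.factorial : ℝ) ≠ 0 := by positivity
    rw [abs_mul, abs_div, abs_pow, abs_neg, abs_one, one_pow, abs_of_nonneg (by positivity),
      abs_of_nonneg (by positivity), div_pow]
    field_simp
  have := hasSum_mul_integral_pow hm hδ H hd
  rw [phik_eq_integral k hx]
  convert! this using 1
  · ext m
    rw [← hmom]
    ring
  · congr 1 with t
    rw [besselAux]
    refine congrArg _ (tsum_congr fun m => ?_)
    ring

theorem summable_norm_altSum_mul (k : ℕ) (x : ℝ) :
    Summable fun m : ℕ =>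
      ‖altSum (fun i => lam k i / i.factorial) (m + k) * (x ^ m / m.factorial)‖ := by
  refine (hasSum_phik k (abs_nonneg x)).summable.norm.congr fun m => ?_
  simp

theorem exp_mul_phik (k : ℕ) (x : ℝ) :
    (Summable fun n : ℕ => (-1 : ℝ) ^ n * ell k n * x ^ n / n.factorial) ∧
    (∑' m : ℕ, altSum (fun i => lam k i / i.factorial) (m + k) * (x ^ m / m.factorial)) *
      Real.exp x = ∑' n : ℕ, (-1 : ℝ) ^ n * ell k n * x ^ n / n.factorial := by
  have h1 := summable_norm_altSum_mul k x
  have h2 : Summable fun m : ℕ => ‖x ^ m / (m.factorial : ℝ)‖ :=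
    (Real.summable_pow_div_factorial x).norm
  have e : (fun n : ℕ => (-1 : ℝ) ^ n * ell k n * x ^ n / n.factorial) = fun n =>
      ∑ p ∈ antidiagonal n, altSum (fun i => lam k i / i.factorial) (p.1 + k) *
        (x ^ p.1 / p.1.factorial) * (x ^ p.2 / p.2.factorial) := by
    ext n
    rw [neg_one_pow_mul_ell, sum_mul, sum_div, Nat.sum_antidiagonal_eq_sum_range_succ_mk]
    refine sum_congr rfl fun j hj => ?_
    have hj : j ≤ n := Nat.lt_succ_iff.1 (mem_range.1 hj)
    rw [Nat.cast_choose ℝ hj, ← Nat.add_sub_of_le hj, pow_add, Nat.add_sub_cancel_left]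
    have : ((j + (n - j)).factorial : ℝ) ≠ 0 := by positivity
    field_simp
  rw [e]
  refine ⟨(summable_norm_sum_mul_antidiagonal_of_summable_norm h1 h2).of_norm, ?_⟩
  rw [← tsum_mul_tsum_eq_tsum_sum_antidiagonal_of_summable_norm h1 h2, Real.exp_eq_exp_ℝ,
    NormedSpace.exp_eq_tsum_div]

theorem hasDerivAt_tsum_pow {c : ℕ → ℝ} (hc : ∀ m, |c m| ≤ 1 / m.factorial) (y : ℝ) :
    HasDerivAt (fun y => ∑' m : ℕ, c m * y ^ m) (∑' m : ℕ, c m * (m * y ^ (m - 1))) y := by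
  have hu : Summable fun m : ℕ => 1 / (m.factorial : ℝ) * (m * (|y| + 1) ^ (m - 1)) := by
    rw [← summable_nat_add_iff 1]
    refine (Real.summable_pow_div_factorial (|y| + 1)).congr fun m => ?_
    rw [Nat.factorial_succ]
    push_cast
    have : (m.factorial : ℝ) ≠ 0 := by positivity
    field_simp
  refine hasDerivAt_tsum_of_isPreconnected (t := Metric.ball 0 (|y| + 1)) (y₀ := 0) hu
    Metric.isOpen_ball (convex_ball _ _).isPreconnected
    (fun m z _ => (hasDerivAt_pow m z).const_mul (c m)) (fun m z hz => ?_)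
    (Metric.mem_ball_self (by positivity)) ?_ (by simp)
  · have hz : |z| ≤ |y| + 1 := by simpa using (Metric.mem_ball.1 hz).le
    rw [norm_mul, norm_mul, norm_pow, Real.norm_natCast, Real.norm_eq_abs, Real.norm_eq_abs]
    gcongr
    exact hc m
  · refine summable_of_ne_finset_zero (s := {0}) fun m hm => ?_
    simp [zero_pow (by simpa using hm : m ≠ 0)]

theorem abs_besselAux_coeff_le (m : ℕ) :
    |(-1) ^ m / (m.factorial : ℝ) ^ 2 * (m : ℝ)| ≤ 1 / (m.factorial : ℝ) ∧
      |(-1) ^ m / (m.factorial : ℝ) ^ 2| ≤ 1 / (m.factorial : ℝ) := by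
  have h1 : (m : ℝ) ≤ m.factorial := by exact_mod_cast Nat.self_le_factorial m
  have h2 : (1 : ℝ) ≤ m.factorial := by exact_mod_cast Nat.one_le_iff_ne_zero.2 m.factorial_ne_zero
  have h3 : |(-1) ^ m / (m.factorial : ℝ) ^ 2| = 1 / (m.factorial : ℝ) ^ 2 := by
    simp [abs_div]
  rw [abs_mul, h3, Nat.abs_cast]
  constructor
  · rw [div_mul_eq_mul_div, div_le_div_iff₀ (by positivity) (by positivity)]
    nlinarith
  · exact one_div_le_one_div_of_le (by positivity) (by nlinarith)

/-- The function `y` times the derivative of `besselAux`. -/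
noncomputable def besselAuxDeriv (y : ℝ) : ℝ :=
  ∑' m : ℕ, (-1) ^ m / (m.factorial : ℝ) ^ 2 * m * y ^ m

theorem hasDerivAt_besselAux {y : ℝ} (hy : y ≠ 0) :
    HasDerivAt besselAux (besselAuxDeriv y / y) y := by
  convert! hasDerivAt_tsum_pow (fun m => (abs_besselAux_coeff_le m).2) y using 1
  rw [besselAuxDeriv, ← tsum_div_const]
  refine tsum_congr fun m => ?_
  cases m with
  | zero => simp
  | succ m =>
    rw [Nat.add_sub_cancel, pow_succ]
    field_simp
    ring

theorem continuous_besselAux : Continuous besselAux :=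
  continuous_iff_continuousAt.2 fun y =>
    (hasDerivAt_tsum_pow (fun m => (abs_besselAux_coeff_le m).2) y).continuousAt

theorem summable_besselAux (y : ℝ) :
    Summable fun m : ℕ => (-1) ^ m / (m.factorial : ℝ) ^ 2 * y ^ m := by
  refine Summable.of_norm_bounded (Real.summable_pow_div_factorial |y|) fun m => ?_
  rw [norm_mul, norm_pow, Real.norm_eq_abs, Real.norm_eq_abs, div_eq_mul_one_div (|y| ^ m),
    mul_comm (|y| ^ m)]
  gcongr
  exact (abs_besselAux_coeff_le m).2

theorem hasDerivAt_besselAuxDeriv (y : ℝ) : HasDerivAt besselAuxDeriv (-besselAux y) y := by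
  convert! hasDerivAt_tsum_pow (fun m => (abs_besselAux_coeff_le m).1) y using 1
  have e (m : ℕ) : (-1) ^ (m + 1) / ((m + 1).factorial : ℝ) ^ 2 * ((m + 1 : ℕ) : ℝ) *
      (((m + 1 : ℕ) : ℝ) * y ^ (m + 1 - 1)) = -((-1) ^ m / (m.factorial : ℝ) ^ 2 * y ^ m) := by
    rw [Nat.factorial_succ, Nat.add_sub_cancel]
    push_cast
    have : (m.factorial : ℝ) ≠ 0 := by positivity
    field_simp
    ring
  rw [tsum_eq_zero_add' ((summable_besselAux y).neg.congr fun m => (e m).symm), tsum_congr e,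
    tsum_neg, besselAux]
  simp

theorem besselAux_sq_le : ∃ C : ℝ, ∀ s : ℝ, 1 ≤ s → s * besselAux (s ^ 2) ^ 2 ≤ C := by
  set F : ℝ → ℝ := fun s => s * besselAux (s ^ 2) ^ 2 +
    (besselAuxDeriv (s ^ 2) ^ 2 + besselAux (s ^ 2) * besselAuxDeriv (s ^ 2) / 2 +
      besselAux (s ^ 2) ^ 2 / 8) / s with hF
  have hd (s : ℝ) (hs : 0 < s) : HasDerivAt F (-(besselAux (s ^ 2) ^ 2 / (8 * s ^ 2))) s := by
    have h2 : HasDerivAt (fun s : ℝ => s ^ 2) (2 * s) s := by simpa using hasDerivAt_pow 2 s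
    have hA : HasDerivAt (fun s => besselAux (s ^ 2))
        (besselAuxDeriv (s ^ 2) / s ^ 2 * (2 * s)) s :=
      HasDerivAt.comp (h₂ := besselAux) s (hasDerivAt_besselAux (by positivity)) h2
    have hB : HasDerivAt (fun s => besselAuxDeriv (s ^ 2)) (-besselAux (s ^ 2) * (2 * s)) s :=
      HasDerivAt.comp (h₂ := besselAuxDeriv) s (hasDerivAt_besselAuxDeriv _) h2
    convert! ((hasDerivAt_id s).mul (hA.pow 2)).add
      ((((hB.pow 2).add ((hA.mul hB).div_const 2)).add ((hA.pow 2).div_const 8)).div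
        (hasDerivAt_id s) hs.ne') using 1
    simp
    field_simp
    ring
  have hanti : AntitoneOn F (Set.Ici 1) := by
    refine antitoneOn_of_deriv_nonpos (convex_Ici 1)
      (fun s hs => (hd s (zero_lt_one.trans_le hs)).continuousAt.continuousWithinAt)
      (fun s hs => ?_) fun s hs => ?_
    all_goals
      rw [interior_Ici] at hs
      have hs' := hd s (zero_lt_one.trans hs)
    · exact hs'.differentiableAt.differentiableWithinAt
    · rw [hs'.deriv]
      exact neg_nonpos.2 (by positivity)
  refine ⟨F 1, fun s hs => le_trans ?_ (hanti Set.self_mem_Ici hs hs)⟩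
  refine le_add_of_nonneg_right (div_nonneg ?_ (zero_le_one.trans hs))
  nlinarith [sq_nonneg (besselAuxDeriv (s ^ 2) + besselAux (s ^ 2) / 4),
    sq_nonneg (besselAux (s ^ 2))]

theorem tendsto_besselAux : Tendsto besselAux atTop (𝓝 0) := by
  obtain ⟨C, hC⟩ := besselAux_sq_le
  have h1 : Tendsto (fun y => besselAux y ^ 2) atTop (𝓝 0) := by
    refine squeeze_zero' (.of_forall fun y => sq_nonneg _) ?_
      (Real.tendsto_sqrt_atTop.const_div_atTop C)
    filter_upwards [eventually_ge_atTop 1] with y hy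
    have h := hC (√y) (Real.one_le_sqrt.2 hy)
    rw [Real.sq_sqrt (by linarith)] at h
    rw [le_div_iff₀ (Real.sqrt_pos.2 (by linarith))]
    linarith
  have h2 := h1.sqrt
  simp only [Real.sqrt_sq_eq_abs, Real.sqrt_zero] at h2
  exact (tendsto_zero_iff_abs_tendsto_zero _).2 h2

theorem besselAux_bounded : ∃ C : ℝ, ∀ y : ℝ, 0 ≤ y → |besselAux y| ≤ C := by
  obtain ⟨Y, hY⟩ := eventually_atTop.1
    (tendsto_besselAux.abs.eventually_le_const (show |(0 : ℝ)| < 1 by simp))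
  obtain ⟨C, hC⟩ := isCompact_Icc.exists_bound_of_continuousOn (s := Set.Icc 0 Y)
    continuous_besselAux.continuousOn
  refine ⟨max C 1, fun y hy => ?_⟩
  rcases le_total y Y with h | h
  · exact (hC y ⟨hy, h⟩).trans (le_max_left _ _)
  · exact (hY y h).trans (le_max_right _ _)

theorem tendsto_phik (k : ℕ) : Tendsto (phik k) atTop (𝓝 0) := by
  obtain ⟨hm, C, δ, -, hδ, H, -⟩ := expDelta_bound_and_moments k
  obtain ⟨B, hB⟩ := besselAux_bounded
  have hintegrable : IntegrableOn (expDelta k) (Set.Ioi 0) := ExpDecay.integrableOn ⟨C, δ, hδ, H⟩ hm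
  have key : Tendsto (fun x => ∫ t in Set.Ioi 0, expDelta k t * besselAux (x * t)) atTop
      (𝓝 (∫ _ in Set.Ioi (0 : ℝ), (0 : ℝ))) := by
    refine tendsto_integral_filter_of_dominated_convergence (fun t => ‖expDelta k t‖ * B) ?_ ?_
      (hintegrable.norm.mul_const B) ?_
    · refine .of_forall fun x => ?_
      have := continuous_besselAux.measurable
      exact Measurable.aestronglyMeasurable (by fun_prop)
    · filter_upwards [eventually_ge_atTop 0] with x hx
      refine (ae_restrict_iff' measurableSet_Ioi).2 (.of_forall fun t ht => ?_)
      rw [norm_mul]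
      gcongr
      exact hB _ (mul_nonneg hx (le_of_lt ht))
    · refine (ae_restrict_iff' measurableSet_Ioi).2 (.of_forall fun t ht => ?_)
      have := (tendsto_besselAux.comp (tendsto_id.atTop_mul_const ht)).const_mul (expDelta k t)
      simpa using this
  rw [integral_zero] at key
  refine key.congr' ?_
  filter_upwards [eventually_ge_atTop 0] with x hx using (phik_eq_integral k hx).symm

theorem stmt15 (k : ℕ) (hk : 0 < k) :
    (∀ x : ℝ, Summable fun n : ℕ => (-1 : ℝ) ^ n * ell k n * x ^ n / (Nat.factorial n)) ∧
    (∀ x : ℝ, 0 ≤ x →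
      phik k x = Real.exp (-x) * ∑' n : ℕ, (-1 : ℝ) ^ n * ell k n * x ^ n / (Nat.factorial n)) ∧
    Tendsto
      (fun x : ℝ => Real.exp (-x) * ∑' n : ℕ, (-1 : ℝ) ^ n * ell k n * x ^ n / (Nat.factorial n))
      atTop (𝓝 0) := by
  have hphi : ∀ x : ℝ, 0 ≤ x → phik k x =
      Real.exp (-x) * ∑' n : ℕ, (-1 : ℝ) ^ n * ell k n * x ^ n / (Nat.factorial n) := by
    intro x hx
    rw [← (exp_mul_phik k x).2, (hasSum_phik k hx).tsum_eq, mul_left_comm, ← Real.exp_add]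
    simp
  refine ⟨fun x => (exp_mul_phik k x).1, hphi, (tendsto_phik k).congr' ?_⟩
  filter_upwards [eventually_ge_atTop 0] with x hx using hphi x hx
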